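/- arXiv:2405.10797 — 3 statements merged into one kernel-verified Lean document; each statement's English description precedes it below -/
import Mathlib

section
/- The integral of the linear function (w,x,y,z) ↦ 3w + 4x + y + 2z over the convex hull Δ in ℝ⁴ of the eight points (0,0,0,0), (1,0,0,0), (0,1,0,0), (0,0,1,0), (0,0,0,1), (0,1,0,1), (0,1,1,0), (0,0,0,2), with respect to 4-dimensional Lebesgue measure, equals 2/3. -/
open MeasureTheory

/-- The Okounkov body Δ of the quintic Del Pezzo fourfold `M₄`:
the convex hull in ℝ⁴ of the eight points
(0,0,0,0), (1,0,0,0), (0,1,0,0), (0,0,1,0), (0,0,0,1), (0,1,0,1), (0,1,1,0), (0,0,0,2). -/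
noncomputable def DeltaM4 : Set (Fin 4 → ℝ) :=
  convexHull ℝ
    ({![0,0,0,0], ![1,0,0,0], ![0,1,0,0], ![0,0,1,0],
      ![0,0,0,1], ![0,1,0,1], ![0,1,1,0], ![0,0,0,2]} : Set (Fin 4 → ℝ))

/-!
`Δ` is a pyramid of height `1` in the `w`-direction with apex `(1, 0, 0, 0)`, over the
three-dimensional polytope `B` spanned by the other seven points. The slice of `Δ` at height `w` is
`(1 - w) • B`, so the integral of `3 w + φ(x, y, z)` with `φ` linear is
`3 vol(B) / (4 · 5) + (∫_B φ) / 5`.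
The polytope `B` lies over the unit square in the `(x, y)`-plane, between `z = 0` and the concave
roof `z = 2 - y - max x y`, which is affine on the two triangles cut out by the diagonal.
Integrating over these triangles gives `vol(B) = 5 / 6` and, for `φ = 4 x + y + 2 z`,
`∫_B φ = 65 / 24`.
-/

open Set Pointwise

section Fubini

theorem setIntegral_prod_of_mem_iff {α β G : Type*} [MeasurableSpace α] [MeasurableSpace β]
    {μ : Measure α} {ν : Measure β} [SFinite μ] [SFinite ν] [NormedAddCommGroup G]
    [NormedSpace ℝ G] {S : Set (α × β)} {s : Set α} {T : α → Set β} {f : α × β → G}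
    (hS : MeasurableSet S) (hs : MeasurableSet s)
    (mem_iff : ∀ a b, (a, b) ∈ S ↔ a ∈ s ∧ b ∈ T a) (hf : IntegrableOn f S (μ.prod ν)) :
    ∫ p in S, f p ∂μ.prod ν = ∫ a in s, ∫ b in T a, f (a, b) ∂ν ∂μ := by
  have fiber_of_mem {a : α} (ha : a ∈ s) : Prod.mk a ⁻¹' S = T a := by
    ext b
    simp [mem_iff, ha]
  have fiber_of_notMem {a : α} (ha : a ∉ s) : Prod.mk a ⁻¹' S = ∅ := by
    ext b
    simp [mem_iff, ha]
  calc ∫ p in S, f p ∂μ.prod ν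
      = ∫ a, ∫ b, S.indicator f (a, b) ∂ν ∂μ := by
        rw [← integral_indicator hS, integral_prod _ (hf.integrable_indicator hS)]
    _ = ∫ a, ∫ b in Prod.mk a ⁻¹' S, f (a, b) ∂ν ∂μ := by
        congr! 2 with a
        exact integral_indicator (measurable_prodMk_left hS)
    _ = ∫ a in s, ∫ b in Prod.mk a ⁻¹' S, f (a, b) ∂ν ∂μ := by
        refine (setIntegral_eq_integral_of_forall_compl_eq_zero fun a ha => ?_).symm
        simp [fiber_of_notMem ha]
    _ = ∫ a in s, ∫ b in T a, f (a, b) ∂ν ∂μ :=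
        setIntegral_congr_fun hs fun a ha => by simp only [fiber_of_mem ha]

theorem setIntegral_square_eq_integral_triangles {g : ℝ × ℝ → ℝ} {g₁ g₂ : ℝ → ℝ → ℝ} {a b : ℝ}
    (hab : a ≤ b) (hg : Continuous g) (hg₁ : ∀ x y, y ≤ x → g (x, y) = g₁ x y)
    (hg₂ : ∀ x y, x ≤ y → g (x, y) = g₂ x y) :
    ∫ p in Icc a b ×ˢ Icc a b, g p =
      ∫ x in a..b, ((∫ y in a..x, g₁ x y) + ∫ y in x..b, g₂ x y) := by
  have intervalIntegrable_slice (x c d : ℝ) : IntervalIntegrable (fun y => g (x, y)) volume c d :=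
    Continuous.intervalIntegrable (by fun_prop) c d
  rw [Measure.volume_eq_prod, setIntegral_prod g
    (hg.continuousOn.integrableOn_compact (isCompact_Icc.prod isCompact_Icc)),
    integral_Icc_eq_integral_Ioc, ← intervalIntegral.integral_of_le hab]
  refine intervalIntegral.integral_congr fun x hx => ?_
  rw [uIcc_of_le hab] at hx
  rw [integral_Icc_eq_integral_Ioc, ← intervalIntegral.integral_of_le hab,
    ← intervalIntegral.integral_add_adjacent_intervals (intervalIntegrable_slice x a x)
      (intervalIntegrable_slice x x b)]
  congr 1
  · refine intervalIntegral.integral_congr fun y hy => hg₁ x y ?_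
    rw [uIcc_of_le hx.1] at hy
    exact hy.2
  · refine intervalIntegral.integral_congr fun y hy => hg₂ x y ?_
    rw [uIcc_of_le hx.2] at hy
    exact hy.1

end Fubini

section IntervalIntegral

theorem integral_one_sub_pow (n : ℕ) : ∫ t in (0 : ℝ)..1, (1 - t) ^ n = 1 / (n + 1) := by
  simp [intervalIntegral.integral_comp_sub_left (fun t : ℝ => t ^ n)]

theorem integral_mul_one_sub_pow (n : ℕ) :
    ∫ t in (0 : ℝ)..1, t * (1 - t) ^ n = 1 / ((n + 1) * (n + 2)) := by
  calc ∫ t in (0 : ℝ)..1, t * (1 - t) ^ n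
      = ∫ t in (0 : ℝ)..1, ((1 - t) ^ n - (1 - t) ^ (n + 1)) := by
        congr! 2 with t
        ring
    _ = 1 / (n + 1) - 1 / ((n + 1 : ℕ) + 1) := by
        rw [intervalIntegral.integral_sub (Continuous.intervalIntegrable (by fun_prop) _ _)
          (Continuous.intervalIntegrable (by fun_prop) _ _), integral_one_sub_pow,
          integral_one_sub_pow]
    _ = 1 / ((n + 1) * (n + 2)) := by
        push_cast
        field_simp
        ring

theorem integral_sum_range_mul_pow (c : ℕ → ℝ) (n : ℕ) (a b : ℝ) :
    ∫ x in a..b, ∑ i ∈ Finset.range n, c i * x ^ i =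
      ∑ i ∈ Finset.range n, c i * ((b ^ (i + 1) - a ^ (i + 1)) / (i + 1)) := by
  rw [intervalIntegral.integral_finsetSum fun i _ =>
    Continuous.intervalIntegrable (by fun_prop) a b]
  simp only [intervalIntegral.integral_const_mul, integral_pow]

theorem integral_eq_of_eq_cubic {f : ℝ → ℝ} (c₀ c₁ c₂ c₃ : ℝ)
    (hf : ∀ x, f x = c₀ + c₁ * x + c₂ * x ^ 2 + c₃ * x ^ 3) (a b : ℝ) :
    ∫ x in a..b, f x = c₀ * (b - a) + c₁ * ((b ^ 2 - a ^ 2) / 2) + c₂ * ((b ^ 3 - a ^ 3) / 3) +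
      c₃ * ((b ^ 4 - a ^ 4) / 4) := by
  have integral_sum := integral_sum_range_mul_pow (fun i => [c₀, c₁, c₂, c₃].getD i 0) 4 a b
  norm_num [Finset.sum_range_succ] at integral_sum
  simpa only [hf] using integral_sum

end IntervalIntegral

section Pyramid

/-- The pyramid in `ℝ × E` with base `{0} × B` and apex `(1, 0)`, encoded by its slices: the slice
at height `t` is `(1 - t) • B`. -/
def pyramid {E : Type*} [AddCommGroup E] [Module ℝ E] (B : Set E) : Set (ℝ × E) :=
  {p | p.1 ∈ Icc 0 1 ∧ p.2 ∈ (1 - p.1) • B}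

theorem convexHull_insert_apex_eq_pyramid {E : Type*} [AddCommGroup E] [Module ℝ E] {V : Set E}
    (hV : V.Nonempty) :
    convexHull ℝ (insert ((1 : ℝ), (0 : E)) ((fun v => (0, v)) '' V)) =
      pyramid (convexHull ℝ V) := by
  have hull_base : convexHull ℝ ((fun v => ((0 : ℝ), v)) '' V) =
      (fun v => (0, v)) '' convexHull ℝ V :=
    ((LinearMap.inr ℝ ℝ E).image_convexHull V).symm
  rw [convexHull_insert (hV.image _), convexJoin_singleton_left, hull_base]
  ext ⟨t, x⟩
  simp only [mem_iUnion, segment_eq_image, exists_mem_image, exists_prop, pyramid, mem_ofPred_eq,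
    mem_smul_set]
  constructor
  · rintro ⟨v, hv, s, ⟨hs₀, hs₁⟩, h⟩
    simp only [Prod.smul_mk, Prod.mk_add_mk, Prod.mk.injEq, smul_eq_mul, mul_one, mul_zero,
      add_zero, smul_zero, zero_add] at h
    obtain ⟨rfl, rfl⟩ := h
    exact ⟨⟨by linarith, by linarith⟩, v, hv, by simp⟩
  · rintro ⟨⟨ht₀, ht₁⟩, v, hv, rfl⟩
    exact ⟨v, hv, 1 - t, ⟨by linarith, by linarith⟩, by simp⟩

variable {E : Type*} [NormedAddCommGroup E] [NormedSpace ℝ E] {B : Set E}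

theorem isCompact_pyramid (hB : IsCompact B) : IsCompact (pyramid B) := by
  have pyramid_eq_image :
      pyramid B = (fun p : ℝ × E => (p.1, (1 - p.1) • p.2)) '' (Icc 0 1 ×ˢ B) := by
    ext ⟨t, x⟩
    simp only [pyramid, mem_ofPred_eq, mem_smul_set, mem_image, mem_prod, Prod.exists,
      Prod.mk.injEq]
    aesop
  rw [pyramid_eq_image]
  exact (isCompact_Icc.prod hB).image (by fun_prop)

variable [FiniteDimensional ℝ E] [MeasurableSpace E] [BorelSpace E] (μ : Measure E)
  [μ.IsAddHaarMeasure]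

theorem setIntegral_pyramid {G : Type*} [NormedAddCommGroup G] [NormedSpace ℝ G]
    (hB : IsCompact B) {f : ℝ × E → G} (hf : IntegrableOn f (pyramid B) (volume.prod μ)) :
    ∫ p in pyramid B, f p ∂volume.prod μ =
      ∫ t in (0 : ℝ)..1, (1 - t) ^ Module.finrank ℝ E • ∫ x in B, f (t, (1 - t) • x) ∂μ := by
  rw [setIntegral_prod_of_mem_iff (isCompact_pyramid hB).measurableSet measurableSet_Icc
    (fun _ _ => Iff.rfl) hf, intervalIntegral.integral_of_le zero_le_one,
    integral_Icc_eq_integral_Ioo, integral_Ioc_eq_integral_Ioo]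
  refine setIntegral_congr_fun measurableSet_Ioo fun t ht => ?_
  have one_sub_pos : 0 < 1 - t := sub_pos.mpr ht.2
  simp only
  rw [Measure.setIntegral_comp_smul_of_pos μ (fun x => f (t, x)) B one_sub_pos,
    smul_inv_smul₀ (pow_pos one_sub_pos _).ne']

theorem setIntegral_pyramid_of_homogeneous (hB : IsCompact B) (c : ℝ) {φ : E → ℝ}
    (hφ : Continuous φ) (hom : ∀ r : ℝ, 0 ≤ r → ∀ x, φ (r • x) = r * φ x) :
    ∫ p in pyramid B, (c * p.1 + φ p.2) ∂volume.prod μ =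
      c * μ.real B / ((Module.finrank ℝ E + 1) * (Module.finrank ℝ E + 2)) +
        (∫ x in B, φ x ∂μ) / (Module.finrank ℝ E + 2) := by
  have slice_integral (n : ℕ) {t : ℝ} (ht : t ≤ 1) :
      (1 - t) ^ n • ∫ x in B, (c * t + φ ((1 - t) • x)) ∂μ =
        c * μ.real B * (t * (1 - t) ^ n) + (∫ x in B, φ x ∂μ) * (1 - t) ^ (n + 1) := by
    have integrable_const : IntegrableOn (fun _ => c * t) B μ :=
      continuousOn_const.integrableOn_compact hB
    have integrable_φ : IntegrableOn (fun x => (1 - t) * φ x) B μ :=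
      (hφ.const_mul _).continuousOn.integrableOn_compact hB
    simp only [hom (1 - t) (sub_nonneg.mpr ht), smul_eq_mul]
    rw [integral_add integrable_const integrable_φ, setIntegral_const, integral_const_mul,
      smul_eq_mul]
    ring
  rw [setIntegral_pyramid μ hB (ContinuousOn.integrableOn_compact (isCompact_pyramid hB)
    (by fun_prop)), intervalIntegral.integral_congr fun t ht =>
      slice_integral _ (uIcc_of_le (zero_le_one' ℝ) ▸ ht).2,
    intervalIntegral.integral_add (Continuous.intervalIntegrable (by fun_prop) _ _)
      (Continuous.intervalIntegrable (by fun_prop) _ _), intervalIntegral.integral_const_mul,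
    intervalIntegral.integral_const_mul, integral_mul_one_sub_pow, integral_one_sub_pow]
  push_cast
  ring

end Pyramid

section ClosedRegionBetween

/-- The region over `s` between the graphs of `f` and `g`, with both graphs included (unlike in
`regionBetween`). -/
def closedRegionBetween {α : Type*} (f g : α → ℝ) (s : Set α) : Set (α × ℝ) :=
  {p | p.1 ∈ s ∧ p.2 ∈ Icc (f p.1) (g p.1)}

theorem setIntegral_closedRegionBetween {α G : Type*} [MeasurableSpace α] [NormedAddCommGroup G]
    [NormedSpace ℝ G] {μ : Measure α} [SFinite μ] {f g : α → ℝ} {s : Set α} {F : α × ℝ → G}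
    (hf : Measurable f) (hg : Measurable g) (hs : MeasurableSet s) (hfg : ∀ a ∈ s, f a ≤ g a)
    (hF : IntegrableOn F (closedRegionBetween f g s) (μ.prod volume)) :
    ∫ p in closedRegionBetween f g s, F p ∂μ.prod volume =
      ∫ a in s, (∫ z in f a..g a, F (a, z)) ∂μ := by
  have measurableSet_region : MeasurableSet (closedRegionBetween f g s) :=
    measurableSet_region_between_cc hf hg hs
  rw [setIntegral_prod_of_mem_iff measurableSet_region hs (fun _ _ => Iff.rfl) hF]
  refine setIntegral_congr_fun hs fun a ha => ?_
  simp only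
  rw [integral_Icc_eq_integral_Ioc, intervalIntegral.integral_of_le (hfg a ha)]

variable {E : Type*} [AddCommGroup E] [Module ℝ E] {f g : E → ℝ} {s : Set E}

theorem convex_closedRegionBetween (hf : ConvexOn ℝ s f) (hg : ConcaveOn ℝ s g) :
    Convex ℝ (closedRegionBetween f g s) := by
  have eq_epigraph_inter_hypograph : closedRegionBetween f g s =
      {p : E × ℝ | p.1 ∈ s ∧ f p.1 ≤ p.2} ∩ {p : E × ℝ | p.1 ∈ s ∧ p.2 ≤ g p.1} := by
    ext p
    simp only [closedRegionBetween, mem_ofPred_eq, mem_Icc, mem_inter_iff]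
    tauto
  rw [eq_epigraph_inter_hypograph]
  exact hf.convex_epigraph.inter hg.convex_hypograph

theorem closedRegionBetween_subset_of_convex {C : Set (E × ℝ)} (hC : Convex ℝ C)
    (hf : ∀ x ∈ s, (x, f x) ∈ C) (hg : ∀ x ∈ s, (x, g x) ∈ C) :
    closedRegionBetween f g s ⊆ C := by
  rintro ⟨x, z⟩ ⟨hx, hz⟩
  have mem_segment : (x, z) ∈ segment ℝ (x, f x) (x, g x) := by
    rw [← Prod.image_mk_segment_right, segment_eq_Icc (hz.1.trans hz.2)]
    exact mem_image_of_mem _ hz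
  exact hC.segment_subset (hf x hx) (hg x hx) mem_segment

end ClosedRegionBetween

section Base

/-- The vertices of `DeltaM4` other than `(1, 0, 0, 0)`, with the coordinate `w = 0` dropped and
`(x, y, z)` grouped as `((x, y), z)`. -/
def baseVertices : Set ((ℝ × ℝ) × ℝ) :=
  {((0, 0), 0), ((1, 0), 0), ((0, 1), 0), ((0, 0), 1), ((1, 0), 1), ((1, 1), 0), ((0, 0), 2)}

/-- The upper boundary, as a function of `(x, y)` in the unit square, of the convex hull of
`baseVertices`. -/
def baseRoof (p : ℝ × ℝ) : ℝ := 2 - p.2 - max p.1 p.2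

theorem continuous_baseRoof : Continuous baseRoof := by
  unfold baseRoof
  fun_prop

theorem concaveOn_baseRoof {s : Set (ℝ × ℝ)} (hs : Convex ℝ s) : ConcaveOn ℝ s baseRoof :=
  ((concaveOn_const 2 hs).sub ((LinearMap.snd ℝ ℝ ℝ).convexOn hs)).sub
    (((LinearMap.fst ℝ ℝ ℝ).convexOn hs).sup ((LinearMap.snd ℝ ℝ ℝ).convexOn hs))

theorem baseRoof_of_ge {x y : ℝ} (h : y ≤ x) : baseRoof (x, y) = 2 - x - y := by
  simp only [baseRoof, max_eq_left h]
  ring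

theorem baseRoof_of_le {x y : ℝ} (h : x ≤ y) : baseRoof (x, y) = 2 - 2 * y := by
  simp only [baseRoof, max_eq_right h]
  ring

theorem baseRoof_nonneg {p : ℝ × ℝ} (hp : p ∈ Icc (0 : ℝ) 1 ×ˢ Icc (0 : ℝ) 1) :
    0 ≤ baseRoof p := by
  have max_le_one : max p.1 p.2 ≤ 1 := max_le hp.1.2 hp.2.2
  unfold baseRoof
  linarith [hp.2.2]

theorem smul_add_smul_add_smul_mem_of_convex {E : Type*} [AddCommGroup E] [Module ℝ E] {C : Set E}
    (hC : Convex ℝ C) {u v w : E} (hu : u ∈ C) (hv : v ∈ C) (hw : w ∈ C) {a b c : ℝ}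
    (ha : 0 ≤ a) (hb : 0 ≤ b) (hc : 0 ≤ c) (habc : a + b + c = 1) :
    a • u + b • v + c • w ∈ C := by
  have sum_mem := hC.sum_mem (t := Finset.univ) (w := ![a, b, c]) (z := ![u, v, w])
    (by simp [Fin.forall_fin_succ, *]) (by simp [Fin.sum_univ_three, habc])
    (by simp [Fin.forall_fin_succ, *])
  simpa [Fin.sum_univ_three] using sum_mem

theorem mk_mem_of_convex_of_le {C : Set ((ℝ × ℝ) × ℝ)} (hC : Convex ℝ C) {z₀₀ z₀₁ z₁₁ x y : ℝ}
    (h₀₀ : ((0, 0), z₀₀) ∈ C) (h₀₁ : ((0, 1), z₀₁) ∈ C) (h₁₁ : ((1, 1), z₁₁) ∈ C)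
    (hx : 0 ≤ x) (hxy : x ≤ y) (hy : y ≤ 1) :
    ((x, y), (1 - y) * z₀₀ + (y - x) * z₀₁ + x * z₁₁) ∈ C := by
  have comb_mem := smul_add_smul_add_smul_mem_of_convex hC h₀₀ h₀₁ h₁₁ (sub_nonneg.mpr hy)
    (sub_nonneg.mpr hxy) hx (by ring)
  simpa using comb_mem

theorem mk_mem_of_convex_of_ge {C : Set ((ℝ × ℝ) × ℝ)} (hC : Convex ℝ C) {z₀₀ z₁₀ z₁₁ x y : ℝ}
    (h₀₀ : ((0, 0), z₀₀) ∈ C) (h₁₀ : ((1, 0), z₁₀) ∈ C) (h₁₁ : ((1, 1), z₁₁) ∈ C)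
    (hy : 0 ≤ y) (hyx : y ≤ x) (hx : x ≤ 1) :
    ((x, y), (1 - x) * z₀₀ + (x - y) * z₁₀ + y * z₁₁) ∈ C := by
  have comb_mem := smul_add_smul_add_smul_mem_of_convex hC h₀₀ h₁₀ h₁₁ (sub_nonneg.mpr hx)
    (sub_nonneg.mpr hyx) hy (by ring)
  simpa using comb_mem

theorem mk_zero_mem_convexHull_baseVertices {p : ℝ × ℝ}
    (hp : p ∈ Icc (0 : ℝ) 1 ×ˢ Icc (0 : ℝ) 1) : (p, 0) ∈ convexHull ℝ baseVertices := by
  obtain ⟨x, y⟩ := p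
  obtain ⟨⟨hx₀, hx₁⟩, hy₀, hy₁⟩ := hp
  have vertex_mem {v : (ℝ × ℝ) × ℝ} (hv : v ∈ baseVertices) : v ∈ convexHull ℝ baseVertices :=
    subset_convexHull ℝ _ hv
  have hC := convex_convexHull ℝ baseVertices
  rcases le_total x y with hxy | hyx
  · simpa using mk_mem_of_convex_of_le hC (z₀₀ := 0) (z₀₁ := 0) (z₁₁ := 0)
      (vertex_mem (by simp [baseVertices])) (vertex_mem (by simp [baseVertices]))
      (vertex_mem (by simp [baseVertices])) hx₀ hxy hy₁
  · simpa using mk_mem_of_convex_of_ge hC (z₀₀ := 0) (z₁₀ := 0) (z₁₁ := 0)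
      (vertex_mem (by simp [baseVertices])) (vertex_mem (by simp [baseVertices]))
      (vertex_mem (by simp [baseVertices])) hy₀ hyx hx₁

theorem mk_baseRoof_mem_convexHull_baseVertices {p : ℝ × ℝ}
    (hp : p ∈ Icc (0 : ℝ) 1 ×ˢ Icc (0 : ℝ) 1) : (p, baseRoof p) ∈ convexHull ℝ baseVertices := by
  obtain ⟨x, y⟩ := p
  obtain ⟨⟨hx₀, hx₁⟩, hy₀, hy₁⟩ := hp
  have vertex_mem {v : (ℝ × ℝ) × ℝ} (hv : v ∈ baseVertices) : v ∈ convexHull ℝ baseVertices :=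
    subset_convexHull ℝ _ hv
  have hC := convex_convexHull ℝ baseVertices
  rcases le_total x y with hxy | hyx
  · convert! mk_mem_of_convex_of_le hC (z₀₀ := 2) (z₀₁ := 0) (z₁₁ := 0)
      (vertex_mem (by simp [baseVertices])) (vertex_mem (by simp [baseVertices]))
      (vertex_mem (by simp [baseVertices])) hx₀ hxy hy₁ using 2
    rw [baseRoof_of_le hxy]
    ring
  · convert! mk_mem_of_convex_of_ge hC (z₀₀ := 2) (z₁₀ := 1) (z₁₁ := 0)
      (vertex_mem (by simp [baseVertices])) (vertex_mem (by simp [baseVertices]))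
      (vertex_mem (by simp [baseVertices])) hy₀ hyx hx₁ using 2
    rw [baseRoof_of_ge hyx]
    ring

theorem convexHull_baseVertices :
    convexHull ℝ baseVertices =
      closedRegionBetween 0 baseRoof (Icc (0 : ℝ) 1 ×ˢ Icc (0 : ℝ) 1) := by
  have convex_square : Convex ℝ (Icc (0 : ℝ) 1 ×ˢ Icc (0 : ℝ) 1) :=
    (convex_Icc 0 1).prod (convex_Icc 0 1)
  apply Subset.antisymm
  · refine convexHull_min ?_ (convex_closedRegionBetween (convexOn_const 0 convex_square)
      (concaveOn_baseRoof convex_square))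
    rintro v (rfl | rfl | rfl | rfl | rfl | rfl | rfl) <;>
      norm_num [closedRegionBetween, baseRoof]
  · exact closedRegionBetween_subset_of_convex (convex_convexHull ℝ _)
      (fun _ => mk_zero_mem_convexHull_baseVertices)
      (fun _ => mk_baseRoof_mem_convexHull_baseVertices)

theorem isCompact_convexHull_baseVertices : IsCompact (convexHull ℝ baseVertices) :=
  Set.Finite.isCompact_convexHull ℝ (by simp [baseVertices])

theorem setIntegral_convexHull_baseVertices {F : (ℝ × ℝ) × ℝ → ℝ} (hF : Continuous F) :
    ∫ v in convexHull ℝ baseVertices, F v =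
      ∫ p in Icc (0 : ℝ) 1 ×ˢ Icc (0 : ℝ) 1, ∫ z in (0 : ℝ)..baseRoof p, F (p, z) := by
  have integrable_F : IntegrableOn F (convexHull ℝ baseVertices) :=
    hF.continuousOn.integrableOn_compact isCompact_convexHull_baseVertices
  rw [convexHull_baseVertices] at integrable_F ⊢
  exact setIntegral_closedRegionBetween measurable_const continuous_baseRoof.measurable
    (measurableSet_Icc.prod measurableSet_Icc) (fun _ => baseRoof_nonneg) integrable_F

theorem volume_real_convexHull_baseVertices : volume.real (convexHull ℝ baseVertices) = 5 / 6 := by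
  have lower_triangle (x : ℝ) : ∫ y in (0 : ℝ)..x, (2 - x - y) = 2 * x - 3 / 2 * x ^ 2 := by
    rw [integral_eq_of_eq_cubic (2 - x) (-1) 0 0 (fun y => by ring)]
    ring
  have upper_triangle (x : ℝ) : ∫ y in x..1, (2 - 2 * y) = 1 - 2 * x + x ^ 2 := by
    rw [integral_eq_of_eq_cubic 2 (-2) 0 0 (fun y => by ring)]
    ring
  calc volume.real (convexHull ℝ baseVertices)
      = ∫ p in Icc (0 : ℝ) 1 ×ˢ Icc (0 : ℝ) 1, baseRoof p := by
        simpa using setIntegral_convexHull_baseVertices (F := fun _ => 1) continuous_const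
    _ = ∫ x in (0 : ℝ)..1, ((∫ y in (0 : ℝ)..x, (2 - x - y)) + ∫ y in x..1, (2 - 2 * y)) :=
        setIntegral_square_eq_integral_triangles zero_le_one continuous_baseRoof
          (fun _ _ => baseRoof_of_ge) (fun _ _ => baseRoof_of_le)
    _ = 5 / 6 := by
        simp only [lower_triangle, upper_triangle]
        rw [integral_eq_of_eq_cubic 1 0 (-1 / 2) 0 (fun x => by ring)]
        norm_num

theorem integral_Gzeta_convexHull_baseVertices :
    ∫ v in convexHull ℝ baseVertices, (4 * v.1.1 + v.1.2 + 2 * v.2) = 65 / 24 := by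
  have fiber (p : ℝ × ℝ) : ∫ z in (0 : ℝ)..baseRoof p, (4 * p.1 + p.2 + 2 * z) =
      baseRoof p * (4 * p.1 + p.2 + baseRoof p) := by
    rw [integral_eq_of_eq_cubic (4 * p.1 + p.2) 2 0 0 (fun z => by ring)]
    ring
  have lower_triangle (x : ℝ) : ∫ y in (0 : ℝ)..x, (2 - x - y) * (2 + 3 * x) =
      4 * x + 3 * x ^ 2 - 9 / 2 * x ^ 3 := by
    rw [integral_eq_of_eq_cubic ((2 - x) * (2 + 3 * x)) (-(2 + 3 * x)) 0 0 (fun y => by ring)]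
    ring
  have upper_triangle (x : ℝ) : ∫ y in x..1, (2 - 2 * y) * (2 + 4 * x - y) =
      5 / 3 - 5 * x ^ 2 + 10 / 3 * x ^ 3 := by
    rw [integral_eq_of_eq_cubic (4 + 8 * x) (-(6 + 8 * x)) 2 0 (fun y => by ring)]
    ring
  calc ∫ v in convexHull ℝ baseVertices, (4 * v.1.1 + v.1.2 + 2 * v.2)
      = ∫ p in Icc (0 : ℝ) 1 ×ˢ Icc (0 : ℝ) 1, baseRoof p * (4 * p.1 + p.2 + baseRoof p) := by
        rw [setIntegral_convexHull_baseVertices (by fun_prop)]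
        simp only [fiber]
    _ = ∫ x in (0 : ℝ)..1, ((∫ y in (0 : ℝ)..x, (2 - x - y) * (2 + 3 * x)) +
          ∫ y in x..1, (2 - 2 * y) * (2 + 4 * x - y)) := by
        have continuous_roof := continuous_baseRoof
        refine setIntegral_square_eq_integral_triangles zero_le_one (by fun_prop)
          (fun x y hyx => ?_) (fun x y hxy => ?_)
        · rw [baseRoof_of_ge hyx]
          ring
        · rw [baseRoof_of_le hxy]
          ring
    _ = 65 / 24 := by
        simp only [lower_triangle, upper_triangle]
        rw [integral_eq_of_eq_cubic (5 / 3) 4 (-2) (-7 / 6) (fun x => by ring)]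
        norm_num

theorem integral_Gzeta_pyramid_convexHull_baseVertices :
    ∫ p in pyramid (convexHull ℝ baseVertices), (3 * p.1 + (4 * p.2.1.1 + p.2.1.2 + 2 * p.2.2)) =
      2 / 3 := by
  have : (volume : Measure ((ℝ × ℝ) × ℝ)).IsAddHaarMeasure :=
    Measure.prod.instIsAddHaarMeasure volume volume
  have finrank_eq : Module.finrank ℝ ((ℝ × ℝ) × ℝ) = 3 := by simp
  rw [Measure.volume_eq_prod, setIntegral_pyramid_of_homogeneous volume
      isCompact_convexHull_baseVertices 3 (φ := fun v => 4 * v.1.1 + v.1.2 + 2 * v.2)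
      (by fun_prop) (fun r _ v => by simp only [Prod.smul_fst, Prod.smul_snd, smul_eq_mul]; ring),
    volume_real_convexHull_baseVertices, integral_Gzeta_convexHull_baseVertices, finrank_eq]
  norm_num

end Base

section Coordinates

/-- The identification of `ℝ × (ℝ × ℝ) × ℝ` with `ℝ⁴` given by `(w, (x, y), z) ↦ (w, x, y, z)`. -/
def prodEquivFinFour : ℝ × (ℝ × ℝ) × ℝ ≃ᵐ (Fin 4 → ℝ) where
  toFun p := ![p.1, p.2.1.1, p.2.1.2, p.2.2]
  invFun v := (v 0, (v 1, v 2), v 3)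
  left_inv _ := rfl
  right_inv v := by
    ext i
    fin_cases i <;> rfl
  measurable_toFun := by
    change Measurable fun p : ℝ × (ℝ × ℝ) × ℝ => ![p.1, p.2.1.1, p.2.1.2, p.2.2]
    fun_prop
  measurable_invFun := by
    change Measurable fun v : Fin 4 → ℝ => (v 0, (v 1, v 2), v 3)
    fun_prop

theorem isLinearMap_prodEquivFinFour : IsLinearMap ℝ prodEquivFinFour where
  map_add p q := by
    ext i
    fin_cases i <;> rfl
  map_smul c p := by
    ext i
    fin_cases i <;> rfl

theorem measurePreserving_prodEquivFinFour : MeasurePreserving prodEquivFinFour := by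
  have split_two := volume_preserving_piFinTwo (fun _ : Fin 2 => ℝ)
  have split_three := ((MeasurePreserving.id volume).prod split_two).comp
    (volume_preserving_piFinSuccAbove (fun _ : Fin 3 => ℝ) 0)
  have group_xy := (volume_preserving_prodAssoc (α₁ := ℝ) (β₁ := ℝ) (γ₁ := ℝ)).symm
  have split_four := ((MeasurePreserving.id volume).prod (group_xy.comp split_three)).comp
    (volume_preserving_piFinSuccAbove (fun _ : Fin 4 => ℝ) 0)
  have symm_preserving : MeasurePreserving prodEquivFinFour.symm := split_four
  exact symm_preserving.symm

theorem prodEquivFinFour_image_pyramid :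
    prodEquivFinFour '' pyramid (convexHull ℝ baseVertices) = DeltaM4 := by
  have baseVertices_nonempty : baseVertices.Nonempty := insert_nonempty _ _
  rw [← convexHull_insert_apex_eq_pyramid baseVertices_nonempty,
    isLinearMap_prodEquivFinFour.image_convexHull, DeltaM4, baseVertices]
  simp only [image_insert_eq, image_singleton]
  rw [insert_comm]
  rfl

end Coordinates

/-- The integral over Δ of the G-function `G_ζ(w,x,y,z) = 3w + 4x + y + 2z` equals `2/3`. -/
theorem integral_Gzeta_DeltaM4 :
    ∫ p in DeltaM4, (3 * p 0 + 4 * p 1 + p 2 + 2 * p 3) = 2 / 3 := by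
  have Gzeta_apply (p : ℝ × (ℝ × ℝ) × ℝ) :
      3 * prodEquivFinFour p 0 + 4 * prodEquivFinFour p 1 + prodEquivFinFour p 2 +
        2 * prodEquivFinFour p 3 = 3 * p.1 + (4 * p.2.1.1 + p.2.1.2 + 2 * p.2.2) := by
    change 3 * p.1 + 4 * p.2.1.1 + p.2.1.2 + 2 * p.2.2 = _
    ring
  rw [← prodEquivFinFour_image_pyramid,
    measurePreserving_prodEquivFinFour.setIntegral_image_emb prodEquivFinFour.measurableEmbedding]
  simp only [Gzeta_apply, integral_Gzeta_pyramid_convexHull_baseVertices]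
end

section
/- Define V(t,s) for 0 ≤ t ≤ 1 and 0 ≤ s ≤ 1+t by: V(t,s) = 4(1−t)((1−t)²t + 3(1−t)t² + 2t³ − s³) for 0 ≤ s ≤ t; V(t,s) = 4(s−t)(3(1−s)²t + 3(1−s)t² + t³) + 4(1−s)t((1−s)² + 3(1−s)t + t²) for t ≤ s ≤ 1; V(t,s) = 4(1−t)(1+t−s)³ for 1 ≤ s ≤ 1+t. Then ∫₀¹ ∫₀^{1+t} V(t,s) ds dt = 23/30; equivalently (1/(5/5!)) · ∫₀¹ ∫₀^{1+t} V(t,s)/4! ds dt = 23/30. -/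
open MeasureTheory intervalIntegral

/-- The volume function `V(t,s) = vol(W^{E_W}_{(1,t)} − s E_l)` on the quintic Del Pezzo
fivefold, defined piecewise for `0 ≤ s ≤ t`, `t ≤ s ≤ 1` and `1 ≤ s ≤ 1+t`
(the three formulas agree at the break points `s = t` and `s = 1`). -/
noncomputable def VolEW (t s : ℝ) : ℝ :=
  if s ≤ t then
    4 * (1 - t) * ((1 - t) ^ 2 * t + 3 * (1 - t) * t ^ 2 + 2 * t ^ 3 - s ^ 3)
  else if s ≤ 1 then
    4 * (s - t) * (3 * (1 - s) ^ 2 * t + 3 * (1 - s) * t ^ 2 + t ^ 3) +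
      4 * (1 - s) * t * ((1 - s) ^ 2 + 3 * (1 - s) * t + t ^ 2)
  else
    4 * (1 - t) * (1 + t - s) ^ 3

/-!
For fixed `t ≤ 1` the function `V(t, ·)` is a cubic spline with knots `t` and `1`: it equals
`4(1 - t)(1 + t - s)³ - 4(1 + t)(1 - s)₊³ + 4(1 + t)(t - s)₊³`.
For `0 ≤ c ≤ 1 + t` the truncated power `(c - s)₊³` integrates to `c⁴ / 4` over `[0, 1 + t]`, so
the inner integral is `(1 - t)(1 + t)⁴ - (1 + t) + (1 + t)t⁴ = 2t(1 - t)(1 + t)²`.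
-/

section TruncatedPower

theorem integral_sub_left_pow (a c : ℝ) (n : ℕ) :
    ∫ s in a..c, (c - s) ^ n = (c - a) ^ (n + 1) / (n + 1) := by
  rw [integral_comp_sub_left (fun u => u ^ n), sub_self, integral_pow, zero_pow n.succ_ne_zero,
    sub_zero]

theorem continuous_posPart_sub_left_pow (c : ℝ) (n : ℕ) :
    Continuous fun s : ℝ => (c - s)⁺ ^ n := by
  simp only [posPart_def]
  fun_prop

theorem integral_posPart_sub_left_pow {a b c : ℝ} (hac : a ≤ c) (hcb : c ≤ b) {n : ℕ}
    (hn : n ≠ 0) : ∫ s in a..b, (c - s)⁺ ^ n = (c - a) ^ (n + 1) / (n + 1) := by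
  have integrable (x y : ℝ) : IntervalIntegrable (fun s => (c - s)⁺ ^ n) volume x y :=
    (continuous_posPart_sub_left_pow c n).intervalIntegrable x y
  have left : ∫ s in a..c, (c - s)⁺ ^ n = ∫ s in a..c, (c - s) ^ n := by
    refine integral_congr fun s hs => ?_
    rw [Set.uIcc_of_le hac] at hs
    simp only [posPart_of_nonneg (sub_nonneg.2 hs.2)]
  have right : ∫ s in c..b, (c - s)⁺ ^ n = ∫ _ in c..b, (0 : ℝ) := by
    refine integral_congr fun s hs => ?_
    rw [Set.uIcc_of_le hcb] at hs
    simp only [posPart_of_nonpos (sub_nonpos.2 hs.1), zero_pow hn]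
  rw [← integral_add_adjacent_intervals (integrable a c) (integrable c b), left, right,
    intervalIntegral.integral_zero, add_zero, integral_sub_left_pow]

end TruncatedPower

section VolEW

variable {t : ℝ}

theorem VolEW_eq_posPart (ht : t ≤ 1) (s : ℝ) :
    VolEW t s = 4 * (1 - t) * (1 + t - s) ^ 3 - 4 * (1 + t) * (1 - s)⁺ ^ 3
      + 4 * (1 + t) * (t - s)⁺ ^ 3 := by
  unfold VolEW
  split_ifs with hst hs1
  · rw [posPart_of_nonneg (sub_nonneg.2 (hst.trans ht)), posPart_of_nonneg (sub_nonneg.2 hst)]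
    ring
  · rw [posPart_of_nonneg (sub_nonneg.2 hs1), posPart_of_nonpos (sub_nonpos.2 (not_le.1 hst).le)]
    ring
  · rw [posPart_of_nonpos (sub_nonpos.2 (not_le.1 hs1).le),
      posPart_of_nonpos (sub_nonpos.2 (not_le.1 hst).le)]
    ring

theorem integral_VolEW (ht₀ : 0 ≤ t) (ht₁ : t ≤ 1) :
    ∫ s in (0 : ℝ)..(1 + t), VolEW t s = 2 * t * (1 - t) * (1 + t) ^ 2 := by
  have integrable (k c : ℝ) :
      IntervalIntegrable (fun s => k * (c - s)⁺ ^ 3) volume 0 (1 + t) :=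
    ((continuous_posPart_sub_left_pow c 3).const_mul k).intervalIntegrable _ _
  have integrable_cubic :
      IntervalIntegrable (fun s => 4 * (1 - t) * (1 + t - s) ^ 3) volume 0 (1 + t) :=
    Continuous.intervalIntegrable (by fun_prop) _ _
  calc ∫ s in (0 : ℝ)..(1 + t), VolEW t s
    _ = 4 * (1 - t) * (∫ s in (0 : ℝ)..(1 + t), (1 + t - s) ^ 3)
        - 4 * (1 + t) * (∫ s in (0 : ℝ)..(1 + t), (1 - s)⁺ ^ 3)
        + 4 * (1 + t) * (∫ s in (0 : ℝ)..(1 + t), (t - s)⁺ ^ 3) := by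
      simp only [VolEW_eq_posPart ht₁]
      rw [integral_add (integrable_cubic.sub (integrable _ 1)) (integrable _ t),
        integral_sub integrable_cubic (integrable _ 1)]
      simp only [intervalIntegral.integral_const_mul]
    _ = (1 - t) * (1 + t) ^ 4 - (1 + t) + (1 + t) * t ^ 4 := by
      rw [integral_sub_left_pow,
        integral_posPart_sub_left_pow zero_le_one (by linarith) three_ne_zero,
        integral_posPart_sub_left_pow ht₀ (by linarith) three_ne_zero]
      push_cast
      ring
    _ = 2 * t * (1 - t) * (1 + t) ^ 2 := by ring

end VolEW

/-- The computation `S(W^{E_W}_{••}; E_l) = 23/30`: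
`∫₀¹ ∫₀^{1+t} V(t,s) ds dt = 23/30`. -/
theorem S_WEW_El :
    ∫ t in (0:ℝ)..1, (∫ s in (0:ℝ)..(1 + t), VolEW t s) = 23 / 30 := by
  calc ∫ t in (0 : ℝ)..1, (∫ s in (0 : ℝ)..(1 + t), VolEW t s)
    _ = ∫ t in (0 : ℝ)..1, 2 * t * (1 - t) * (1 + t) ^ 2 := by
      refine integral_congr fun t ht => ?_
      rw [Set.uIcc_of_le zero_le_one] at ht
      exact integral_VolEW ht.1 ht.2
    _ = ∫ t in (0 : ℝ)..1, (2 * t + 2 * t ^ 2 - 2 * t ^ 3 - 2 * t ^ 4) := by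
      congr 1 with t
      ring
    _ = 23 / 30 := by
      rw [intervalIntegral.integral_sub, intervalIntegral.integral_sub,
        intervalIntegral.integral_add]
      · rw [intervalIntegral.integral_const_mul, integral_id]
        norm_num [integral_pow]
      all_goals exact Continuous.intervalIntegrable (by fun_prop) _ _
end

section
/- Define g₅ : [0,1] → ℝ by g₅(t) = 4t − 4t³. Then there exists a unique real number η₀ such that ∫₀¹ (4t−2)·e^{−(4t−2)η₀}·g₅(t) dt = 0; moreover 0.169 < η₀ < 0.170. -/
open MeasureTheory intervalIntegral

/-- The volume function `g₅(t) = vol(π*O(1) − t E_W) = 4t − 4t³` on the blow-up of the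
quintic Del Pezzo fivefold `M₅` along `W ≅ ℙ³`. -/
noncomputable def gFive (t : ℝ) : ℝ := 4 * t - 4 * t ^ 3

/-!
The integral is the first moment of the Duistermaat–Heckman measure tilted by `e^{-φη}`, with
`φ(t) = 4t - 2`. As a function of `η` it is continuous and strictly decreasing, because
`η ↦ s e^{-sη}` is strictly decreasing for every `s ≠ 0`. To locate its zero, expand the
exponential to degree four: the coefficients are the moments of the measure, which have a closed
form, and the remainder on `|η| ≤ 0.17` is below `10⁻⁴`, small enough to decide the signs at
`0.169` and `0.170`.
-/

lemma strictAnti_mul_exp_neg_mul {s : ℝ} (hs : s ≠ 0) :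
    StrictAnti fun η : ℝ ↦ s * Real.exp (-s * η) := by
  intro x y hxy
  rcases hs.lt_or_gt with hneg | hpos
  · exact mul_lt_mul_of_neg_left (Real.exp_lt_exp.2 (by nlinarith)) hneg
  · exact mul_lt_mul_of_pos_left (Real.exp_lt_exp.2 (by nlinarith)) hpos

lemma antitone_mul_exp_neg_mul (s : ℝ) : Antitone fun η : ℝ ↦ s * Real.exp (-s * η) := by
  rcases eq_or_ne s 0 with rfl | hs
  · simp [antitone_const]
  · exact (strictAnti_mul_exp_neg_mul hs).antitone

lemma abs_mul_exp_sub_sum_le {s M η : ℝ} {n : ℕ} (hn : 0 < n) (hs : |s| ≤ M)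
    (hη : M * |η| ≤ 1) :
    |s * Real.exp (-s * η) - ∑ j ∈ Finset.range n, (-η) ^ j / j.factorial * s ^ (j + 1)| ≤
      M * ((M * |η|) ^ n * (n.succ / (n.factorial * n))) := by
  have hM : 0 ≤ M := (abs_nonneg s).trans hs
  have harg : |-s * η| ≤ M * |η| := by
    rw [abs_mul, abs_neg]
    gcongr
  have hfactor : s * Real.exp (-s * η)
      - ∑ j ∈ Finset.range n, (-η) ^ j / j.factorial * s ^ (j + 1) =
      s * (Real.exp (-s * η) - ∑ j ∈ Finset.range n, (-s * η) ^ j / j.factorial) := by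
    rw [mul_sub, Finset.mul_sum]
    congr 1
    refine Finset.sum_congr rfl fun j _ ↦ ?_
    rw [neg_mul_comm, mul_pow]
    ring
  rw [hfactor, abs_mul]
  calc |s| * |Real.exp (-s * η) - ∑ j ∈ Finset.range n, (-s * η) ^ j / j.factorial|
      ≤ M * (|-s * η| ^ n * (n.succ / (n.factorial * n))) := by
        gcongr
        exact Real.exp_bound (harg.trans hη) hn
    _ ≤ M * ((M * |η|) ^ n * (n.succ / (n.factorial * n))) := by gcongr

/-- The first moment of `φ` against the measure `g(t) dt` on `[a, b]` tilted by `e^{-φη}`. It is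
minus the derivative in `η` of `∫ e^{-φη} g`, so its zeros are the critical points of the
`H`-functional when `φ` is a moment map and `g(t) dt` the Duistermaat–Heckman measure. -/
noncomputable def tiltedMoment (φ g : ℝ → ℝ) (a b η : ℝ) : ℝ :=
  ∫ t in a..b, φ t * Real.exp (-φ t * η) * g t

section TiltedMoment

variable {φ g : ℝ → ℝ} {a b : ℝ}

lemma continuous_tiltedMoment (hφ : Continuous φ) (hg : Continuous g) :
    Continuous (tiltedMoment φ g a b) := by
  unfold tiltedMoment
  exact continuous_parametric_intervalIntegral_of_continuous' (by fun_prop) a b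

lemma strictAnti_tiltedMoment (hab : a < b) (hφ : ContinuousOn φ (Set.Icc a b))
    (hg : ContinuousOn g (Set.Icc a b)) (hg_nonneg : ∀ t ∈ Set.Icc a b, 0 ≤ g t)
    (hpos : ∃ c ∈ Set.Icc a b, φ c ≠ 0 ∧ 0 < g c) :
    StrictAnti (tiltedMoment φ g a b) := by
  intro x y hxy
  obtain ⟨c, hc, hφc, hgc⟩ := hpos
  refine integral_lt_integral_of_continuousOn_of_le_of_exists_lt hab (by fun_prop) (by fun_prop)
    (fun t ht ↦ ?_) ⟨c, hc, ?_⟩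
  · exact mul_le_mul_of_nonneg_right (antitone_mul_exp_neg_mul (φ t) hxy.le)
      (hg_nonneg t (Set.Ioc_subset_Icc_self ht))
  · exact mul_lt_mul_of_pos_right (strictAnti_mul_exp_neg_mul hφc hxy) hgc

lemma abs_tiltedMoment_sub_sum_le {M η : ℝ} {n : ℕ} (hab : a ≤ b)
    (hφ : ContinuousOn φ (Set.Icc a b)) (hg : ContinuousOn g (Set.Icc a b)) (hn : 0 < n)
    (hM : ∀ t ∈ Set.Icc a b, |φ t| ≤ M) (hη : M * |η| ≤ 1) :
    |tiltedMoment φ g a b η -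
        ∑ j ∈ Finset.range n, (-η) ^ j / j.factorial * ∫ t in a..b, φ t ^ (j + 1) * g t| ≤
      M * ((M * |η|) ^ n * (n.succ / (n.factorial * n))) * ∫ t in a..b, |g t| := by
  have hsum : ∑ j ∈ Finset.range n, (-η) ^ j / j.factorial * ∫ t in a..b, φ t ^ (j + 1) * g t =
      ∫ t in a..b, (∑ j ∈ Finset.range n, (-η) ^ j / j.factorial * φ t ^ (j + 1)) * g t := by
    simp only [Finset.sum_mul, mul_assoc]
    rw [integral_finsetSum fun j _ ↦
      ContinuousOn.intervalIntegrable_of_Icc hab (by fun_prop)]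
    simp only [intervalIntegral.integral_const_mul]
  rw [hsum, tiltedMoment, ← intervalIntegral.integral_sub
    (ContinuousOn.intervalIntegrable_of_Icc hab (by fun_prop))
    (ContinuousOn.intervalIntegrable_of_Icc hab (by fun_prop)),
    ← intervalIntegral.integral_const_mul, ← Real.norm_eq_abs]
  refine norm_integral_le_of_norm_le hab (ae_of_all _ fun t ht ↦ ?_)
    (ContinuousOn.intervalIntegrable_of_Icc hab (by fun_prop))
  rw [← sub_mul, norm_mul, Real.norm_eq_abs, Real.norm_eq_abs]
  gcongr
  exact abs_mul_exp_sub_sum_le hn (hM t (Set.Ioc_subset_Icc_self ht)) hη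

end TiltedMoment

lemma continuous_gFive : Continuous gFive := by
  unfold gFive
  fun_prop

lemma gFive_nonneg {t : ℝ} (ht : t ∈ Set.Icc (0 : ℝ) 1) : 0 ≤ gFive t := by
  have hcube : t ^ 3 ≤ t := pow_le_of_le_one ht.1 ht.2 three_ne_zero
  unfold gFive
  linarith

lemma integral_pow_mul_gFive_eq_integral_polynomial (k : ℕ) :
    ∫ t in (0 : ℝ)..1, (4 * t - 2) ^ k * gFive t =
      1 / 4 * ∫ u in (-2 : ℝ)..2, (3 / 2 * u ^ k + 1 / 4 * u ^ (k + 1) - 3 / 8 * u ^ (k + 2)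
        - 1 / 16 * u ^ (k + 3)) := by
  have hsubst := integral_comp_mul_sub (a := 0) (b := 1) (fun u : ℝ ↦ 3 / 2 * u ^ k
    + 1 / 4 * u ^ (k + 1) - 3 / 8 * u ^ (k + 2) - 1 / 16 * u ^ (k + 3)) four_ne_zero 2
  norm_num only [smul_eq_mul] at hsubst
  rw [← hsubst]
  congr 1 with t
  unfold gFive
  ring

lemma integral_pow_mul_gFive (k : ℕ) :
    ∫ t in (0 : ℝ)..1, (4 * t - 2) ^ k * gFive t =
      3 / 8 * ((2 ^ (k + 1) - (-2) ^ (k + 1)) / (k + 1))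
        + 1 / 16 * ((2 ^ (k + 2) - (-2) ^ (k + 2)) / (k + 2))
        - 3 / 32 * ((2 ^ (k + 3) - (-2) ^ (k + 3)) / (k + 3))
        - 1 / 64 * ((2 ^ (k + 4) - (-2) ^ (k + 4)) / (k + 4)) := by
  have hint (c : ℝ) (m : ℕ) : IntervalIntegrable (fun u : ℝ ↦ c * u ^ m) volume (-2) 2 :=
    (intervalIntegrable_pow m).const_mul c
  rw [integral_pow_mul_gFive_eq_integral_polynomial,
    intervalIntegral.integral_sub (((hint _ _).add (hint _ _)).sub (hint _ _)) (hint _ _),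
    intervalIntegral.integral_sub ((hint _ _).add (hint _ _)) (hint _ _),
    intervalIntegral.integral_add (hint _ _) (hint _ _)]
  simp only [intervalIntegral.integral_const_mul, integral_pow]
  push_cast
  ring

lemma integral_pow_mul_gFive_of_even {k : ℕ} (hk : Even k) :
    ∫ t in (0 : ℝ)..1, (4 * t - 2) ^ k * gFive t = 3 * 2 ^ k / ((k + 1) * (k + 3)) := by
  rw [integral_pow_mul_gFive]
  simp only [pow_add, hk.neg_pow]
  field_simp
  ring

lemma integral_pow_mul_gFive_of_odd {k : ℕ} (hk : Odd k) :
    ∫ t in (0 : ℝ)..1, (4 * t - 2) ^ k * gFive t = 2 ^ k / ((k + 2) * (k + 4)) := by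
  rw [integral_pow_mul_gFive]
  simp only [pow_add, hk.neg_pow]
  field_simp
  ring

lemma integral_abs_gFive : ∫ t in (0 : ℝ)..1, |gFive t| = 1 := by
  calc ∫ t in (0 : ℝ)..1, |gFive t|
      = ∫ t in (0 : ℝ)..1, (4 * t - 2) ^ 0 * gFive t := by
        refine integral_congr fun t ht ↦ ?_
        rw [Set.uIcc_of_le zero_le_one] at ht
        simp [abs_of_nonneg (gFive_nonneg ht)]
    _ = 1 := by
        rw [integral_pow_mul_gFive_of_even Even.zero]
        norm_num

lemma strictAnti_tiltedMoment_gFive : StrictAnti (tiltedMoment (fun t ↦ 4 * t - 2) gFive 0 1) :=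
  strictAnti_tiltedMoment zero_lt_one (by fun_prop) continuous_gFive.continuousOn
    (fun _ ↦ gFive_nonneg) ⟨3 / 4, by norm_num, by norm_num, by norm_num [gFive]⟩

lemma abs_tiltedMoment_gFive_sub_le {η : ℝ} (hη : |η| ≤ 0.17) :
    |tiltedMoment (fun t ↦ 4 * t - 2) gFive 0 1 η -
        (2 / 15 - 4 / 5 * η + 4 / 35 * η ^ 2 - 8 / 35 * η ^ 3 + 4 / 189 * η ^ 4)| ≤ 1e-4 := by
  have hφ : ∀ t ∈ Set.Icc (0 : ℝ) 1, |4 * t - 2| ≤ 2 := fun t ht ↦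
    abs_le.2 ⟨by linarith [ht.1], by linarith [ht.2]⟩
  have htaylor := abs_tiltedMoment_sub_sum_le (n := 5) (η := η) zero_le_one
    (by fun_prop) continuous_gFive.continuousOn (by norm_num) hφ (by linarith)
  have hsum : ∑ j ∈ Finset.range 5,
      (-η) ^ j / j.factorial * ∫ t in (0 : ℝ)..1, (4 * t - 2) ^ (j + 1) * gFive t =
      2 / 15 - 4 / 5 * η + 4 / 35 * η ^ 2 - 8 / 35 * η ^ 3 + 4 / 189 * η ^ 4 := by
    simp only [Finset.sum_range_succ, Finset.sum_range_zero, Nat.reduceAdd,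
      integral_pow_mul_gFive_of_odd (k := 1) (by decide),
      integral_pow_mul_gFive_of_even (k := 2) (by decide),
      integral_pow_mul_gFive_of_odd (k := 3) (by decide),
      integral_pow_mul_gFive_of_even (k := 4) (by decide),
      integral_pow_mul_gFive_of_odd (k := 5) (by decide)]
    norm_num [Nat.factorial]
    ring
  rw [hsum, integral_abs_gFive] at htaylor
  calc _ ≤ 2 * ((2 * |η|) ^ 5 * ((5 : ℕ).succ / ((5 : ℕ).factorial * (5 : ℕ)))) * 1 := htaylor
    _ ≤ 2 * ((2 * 0.17) ^ 5 * ((5 : ℕ).succ / ((5 : ℕ).factorial * (5 : ℕ)))) * 1 := by gcongr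
    _ ≤ 1e-4 := by norm_num [Nat.factorial]

lemma tiltedMoment_gFive_pos_of_le {η : ℝ} (hη : η ≤ 0.169) :
    0 < tiltedMoment (fun t ↦ 4 * t - 2) gFive 0 1 η := by
  refine lt_of_lt_of_le ?_ (strictAnti_tiltedMoment_gFive.antitone hη)
  have happrox := abs_le.1 (abs_tiltedMoment_gFive_sub_le (η := 0.169) (by norm_num [abs_of_pos]))
  norm_num at happrox ⊢
  linarith [happrox.1]

lemma tiltedMoment_gFive_neg_of_ge {η : ℝ} (hη : 0.170 ≤ η) :
    tiltedMoment (fun t ↦ 4 * t - 2) gFive 0 1 η < 0 := by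
  refine lt_of_le_of_lt (strictAnti_tiltedMoment_gFive.antitone hη) ?_
  have happrox := abs_le.1 (abs_tiltedMoment_gFive_sub_le (η := 0.170) (by norm_num [abs_of_pos]))
  norm_num at happrox ⊢
  linarith [happrox.2]

/-- There is a unique real number `η₀` with
`∫₀¹ (4t−2)·e^{−(4t−2)η₀}·g₅(t) dt = 0`, and it satisfies `0.169 < η₀ < 0.170`.
This `η₀` is the soliton candidate on `M₅`. -/
theorem soliton_candidate_M5 :
    ∃ η₀ : ℝ,
      (∫ t in (0:ℝ)..1, (4 * t - 2) * Real.exp (-(4 * t - 2) * η₀) * gFive t) = 0 ∧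
      0.169 < η₀ ∧ η₀ < 0.170 ∧
      ∀ η : ℝ,
        (∫ t in (0:ℝ)..1, (4 * t - 2) * Real.exp (-(4 * t - 2) * η) * gFive t) = 0 →
          η = η₀ := by
  have hcont : Continuous (tiltedMoment (fun t ↦ 4 * t - 2) gFive 0 1) :=
    continuous_tiltedMoment (by fun_prop) continuous_gFive
  obtain ⟨η₀, ⟨hlower, hupper⟩, hzero⟩ := intermediate_value_Ioo' (by norm_num) hcont.continuousOn
    ⟨tiltedMoment_gFive_neg_of_ge le_rfl, tiltedMoment_gFive_pos_of_le le_rfl⟩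
  exact ⟨η₀, hzero, hlower, hupper,
    fun η hη ↦ strictAnti_tiltedMoment_gFive.injective (Eq.trans hη hzero.symm)⟩
end
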